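/- The Demazure descent algebra 𝔇 is free as a left A-module, with basis the set of all finite words G_{i_1}G_{i_2}⋯G_{i_r} in the generators G_1, …, G_n having no two consecutive equal letters (i_t ≠ i_{t+1} for all t), including the empty word; the same set is also a basis of 𝔇 as a right A-module. -/

import Mathlib

open scoped TensorProduct

noncomputable section

abbrev Vd (d : ℕ) := Fin d → ℂ
abbrev Ad (d : ℕ) := MvPolynomial (Fin d) ℂ

/-- Action of `g ∈ GL(V)` on polynomials: substitute `X j ↦ (g⁻¹ x)_j`. -/
def glAct {d : ℕ} (g : GL (Fin d) ℂ) : Ad d →ₐ[ℂ] Ad d :=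
  MvPolynomial.aeval fun j =>
    ∑ k, ((g⁻¹ : GL (Fin d) ℂ) : Matrix (Fin d) (Fin d) ℂ) j k • MvPolynomial.X k

/-- Embedding of linear forms on `V` as degree-one polynomials. -/
def lin {d : ℕ} (θ : Vd d →ₗ[ℂ] ℂ) : Ad d :=
  ∑ j, θ (Pi.single j 1) • MvPolynomial.X j

structure CoxeterSetup (d n : ℕ) where
  Γ : Subgroup (GL (Fin d) ℂ)
  finite : Finite Γ
  s : Fin n → Γ
  gen : Subgroup.closure (Set.range s) = (⊤ : Subgroup Γ)
  α : Fin n → (Vd d →ₗ[ℂ] ℂ)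
  coroot : Fin n → Vd d
  pairing : ∀ i, α i (coroot i) = 2
  refl : ∀ i (v : Vd d),
    ((s i : GL (Fin d) ℂ) : Matrix (Fin d) (Fin d) ℂ).mulVec v = v - α i v • coroot i


/-- The subalgebra of `Γ'`-invariant polynomials. -/
def FixedSub {d n : ℕ} (S : CoxeterSetup d n) (Γ' : Subgroup S.Γ) : Subalgebra ℂ (Ad d) where
  carrier := {f | ∀ g ∈ Γ', glAct (g : GL (Fin d) ℂ) f = f}
  mul_mem' := fun hf hg g hgmem => by simp [map_mul, hf g hgmem, hg g hgmem]
  add_mem' := fun hf hg g hgmem => by simp [map_add, hf g hgmem, hg g hgmem]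
  algebraMap_mem' := fun c g _ => by simp

/-- `M` (with `Γ'`-action `ρ`) descends to `A^{Γ'}`. -/
def Descends {d n : ℕ} (S : CoxeterSetup d n) (Γ' : Subgroup S.Γ) (M : Type)
    [AddCommGroup M] [Module ℂ M] [Module (Ad d) M] [IsScalarTower ℂ (Ad d) M]
    (ρ : Γ' →* Module.End ℂ M) : Prop :=
  ∃ (N : Type) (_ : AddCommGroup N) (_ : Module (FixedSub S Γ') N)
    (e : ((Ad d) ⊗[FixedSub S Γ'] N) ≃ₗ[Ad d] M),
    ∀ (g : Γ') (a : Ad d) (x : N),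
      ρ g (e (a ⊗ₜ x)) = e ((glAct ((g : S.Γ) : GL (Fin d) ℂ) a) ⊗ₜ x)


/-- Alternating product `x·y·x·⋯` with `m` factors, starting with `x`. -/
def altProd {M : Type*} [Monoid M] (x y : M) : ℕ → M
  | 0 => 1
  | (j + 1) => x * altProd y x j

/-- The order `m_{ij}` of `sᵢ sⱼ` in `Γ`. -/
def mOrd {d n : ℕ} (S : CoxeterSetup d n) (i j : Fin n) : ℕ :=
  orderOf (S.s i * S.s j)

/-- Relations presenting the Demazure descent algebra `𝔇`: the inclusion of `A` is a
`ℂ`-algebra map, `Gᵢ² = 0`, and `Gᵢ·θ = θ(αᵢ^∨) + sᵢ(θ)·Gᵢ` for linear forms `θ`. -/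
inductive DRel {d n : ℕ} (S : CoxeterSetup d n) :
    FreeAlgebra ℂ (Ad d ⊕ Fin n) → FreeAlgebra ℂ (Ad d ⊕ Fin n) → Prop
  | add (a b : Ad d) :
      DRel S (FreeAlgebra.ι ℂ (Sum.inl a) + FreeAlgebra.ι ℂ (Sum.inl b))
        (FreeAlgebra.ι ℂ (Sum.inl (a + b)))
  | mul (a b : Ad d) :
      DRel S (FreeAlgebra.ι ℂ (Sum.inl a) * FreeAlgebra.ι ℂ (Sum.inl b))
        (FreeAlgebra.ι ℂ (Sum.inl (a * b)))
  | scalar (c : ℂ) :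
      DRel S (algebraMap ℂ _ c) (FreeAlgebra.ι ℂ (Sum.inl (algebraMap ℂ (Ad d) c)))
  | sq (i : Fin n) :
      DRel S (FreeAlgebra.ι ℂ (Sum.inr i) * FreeAlgebra.ι ℂ (Sum.inr i)) 0
  | straighten (i : Fin n) (θ : Vd d →ₗ[ℂ] ℂ) :
      DRel S (FreeAlgebra.ι ℂ (Sum.inr i) * FreeAlgebra.ι ℂ (Sum.inl (lin θ)))
        (algebraMap ℂ _ (θ (S.coroot i)) +
          FreeAlgebra.ι ℂ (Sum.inl (glAct ((S.s i : S.Γ) : GL (Fin d) ℂ) (lin θ))) *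
            FreeAlgebra.ι ℂ (Sum.inr i))

/-- The Demazure descent algebra `𝔇`. -/
abbrev DD {d n : ℕ} (S : CoxeterSetup d n) := RingQuot (DRel S)

/-- The generator `Gᵢ ∈ 𝔇`. -/
def GG {d n : ℕ} (S : CoxeterSetup d n) (i : Fin n) : DD S :=
  RingQuot.mkRingHom (DRel S) (FreeAlgebra.ι ℂ (Sum.inr i))

/-- The canonical ring homomorphism `A → 𝔇`. -/
def ofA {d n : ℕ} (S : CoxeterSetup d n) : Ad d →+* DD S where
  toFun a := RingQuot.mkRingHom (DRel S) (FreeAlgebra.ι ℂ (Sum.inl a))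
  map_one' := by
    have h := RingQuot.mkRingHom_rel (DRel.scalar (S := S) 1)
    simpa using h.symm
  map_mul' a b := by
    exact ((RingQuot.mkRingHom_rel (DRel.mul (S := S) a b)).symm).trans (map_mul _ _ _)
  map_zero' := by
    have h := RingQuot.mkRingHom_rel (DRel.scalar (S := S) 0)
    simpa using h.symm
  map_add' a b := by
    exact ((RingQuot.mkRingHom_rel (DRel.add (S := S) a b)).symm).trans (map_add _ _ _)

/-- The element `σᵢ := 1 − αᵢ·Gᵢ ∈ 𝔇`. -/
def sigmaD {d n : ℕ} (S : CoxeterSetup d n) (i : Fin n) : DD S :=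
  1 - ofA S (lin (S.α i)) * GG S i

/-- The set of Coxeter braid relators `B_{ij}`. -/
def coxeterBraidSet {d n : ℕ} (S : CoxeterSetup d n) : Set (DD S) :=
  {x | ∃ i j : Fin n, i ≠ j ∧
    x = altProd (sigmaD S i) (sigmaD S j) (mOrd S i j) -
        altProd (sigmaD S j) (sigmaD S i) (mOrd S i j)}

/-- The set of Demazure braid relators `B^D_{ij}`. -/
def demazureBraidSet {d n : ℕ} (S : CoxeterSetup d n) : Set (DD S) :=
  {x | ∃ i j : Fin n, i ≠ j ∧
    x = altProd (GG S i) (GG S j) (mOrd S i j) -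
        altProd (GG S j) (GG S i) (mOrd S i j)}

/-- The product in `𝔇` of the generators `G` along a word. -/
def wordProd {d n : ℕ} (S : CoxeterSetup d n) (w : List (Fin n)) : DD S :=
  (w.map (GG S)).prod

/-- The sequence of roots `α_k, s_k(α_l), s_k s_l(α_k), …` as degree-one polynomials. -/
def rootSeqP {d n : ℕ} (S : CoxeterSetup d n) (k l : Fin n) (j : ℕ) : Ad d :=
  glAct ((altProd (S.s k) (S.s l) j : S.Γ) : GL (Fin d) ℂ)
    (lin (S.α (if Even j then k else l)))

/-- `Δ_{k,l}`, the product of the `m_{kl}` roots `α_k, s_k(α_l), s_k s_l(α_k), …`. -/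
def DeltaP {d n : ℕ} (S : CoxeterSetup d n) (k l : Fin n) : Ad d :=
  ∏ j ∈ Finset.range (mOrd S k l), rootSeqP S k l j


/-!
Over any algebra `A`, automorphisms `sᵢ` and square-zero `sᵢ`-derivations `Dᵢ` with
`Dᵢ sᵢ = -sᵢ Dᵢ` determine an algebra generated by `A` and elements `Gᵢ` with `Gᵢ² = 0` and
`Gᵢ a = Dᵢ a + sᵢ(a) Gᵢ`. It acts on the free left `A`-module `M` with basis `e_w` indexed by the
reduced words, via `Gᵢ (a e_w) = Dᵢ(a) e_w + sᵢ(a) e_{iw}`, where `e_{iw} = 0` if `iw` is not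
reduced. The `A`-linear map `e_w ↦ G_w` commutes with these actions and is inverse to
`x ↦ x · e_∅`, so the `G_w` form a left basis.

The opposite algebra is of the same kind, for the automorphisms `sᵢ⁻¹` and the skew derivations
`-Dᵢ sᵢ⁻¹` of `Aᵐᵒᵖ`; its left basis is, after reversing words, the right basis.

A reflection `s` with root `α` enters only through `α ∣ a - s a`, which makes the divided
difference `D a = (a - s a) / α` a square-zero `s`-derivation with `D s = -D = -s D`.
-/

open MulOpposite

universe u

/-- Words without two consecutive equal letters. -/
abbrev ReducedWord (ι : Type*) := {w : List ι // w.IsChain (· ≠ ·)}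

namespace ReducedWord

variable {ι : Type*}

/-- The empty word, labelling the vector of the model module that generates it. -/
def nil : ReducedWord ι := ⟨[], .nil⟩

/-- Reversal of reduced words; it intertwines the left and the right basis. -/
def reverse : ReducedWord ι ≃ ReducedWord ι :=
  Function.Involutive.toPerm
    (fun w => ⟨w.1.reverse, List.isChain_reverse.2 (w.2.imp fun _ _ => Ne.symm)⟩)
    fun _ => Subtype.ext (List.reverse_reverse _)

lemma coe_reverse (w : ReducedWord ι) : (reverse w).1 = w.1.reverse := rfl

variable (A : Type*) [Semiring A]

open Classical in
/-- The vector `e_{iw}` of the free module on reduced words, read as `0` if `iw` is not reduced. -/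
def consVec (i : ι) (w : ReducedWord ι) : ReducedWord ι →₀ A :=
  if h : (i :: w.1).IsChain (· ≠ ·) then Finsupp.single ⟨i :: w.1, h⟩ 1 else 0

variable {A} {i : ι} {w : ReducedWord ι}

lemma consVec_of_isChain (h : (i :: w.1).IsChain (· ≠ ·)) :
    consVec A i w = Finsupp.single ⟨i :: w.1, h⟩ 1 := dif_pos h

lemma consVec_of_not_isChain (h : ¬ (i :: w.1).IsChain (· ≠ ·)) : consVec A i w = 0 := dif_neg h

lemma exists_eq_cons_of_not_isChain_cons (h : ¬ (i :: w.1).IsChain (· ≠ ·)) :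
    ∃ v, w.1 = i :: v := by
  obtain ⟨_ | ⟨j, v⟩, hw⟩ := w
  · exact absurd (.singleton i) h
  · have hij : i = j := by_contra fun hij => h (List.isChain_cons_cons.2 ⟨hij, hw⟩)
    exact ⟨v, by rw [hij]⟩

end ReducedWord

/-- The commutation data of a Demazure-type algebra: `k`-algebra automorphisms `twist i` of `A` and
square-zero `twist i`-derivations `deriv i` anticommuting with them. -/
structure NilSkewSystem (k ι A : Type*) [CommRing k] [Ring A] [Algebra k A] where
  twist : ι → A ≃ₐ[k] A
  deriv : ι → A →ₗ[k] A
  deriv_mul : ∀ i a b, deriv i (a * b) = deriv i a * b + twist i a * deriv i b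
  deriv_deriv : ∀ i a, deriv i (deriv i a) = 0
  deriv_twist : ∀ i a, deriv i (twist i a) = -twist i (deriv i a)

namespace NilSkewSystem

section Basic

variable {k ι A : Type*} [CommRing k] [Ring A] [Algebra k A] (Δ : NilSkewSystem k ι A)

lemma deriv_one (i : ι) : Δ.deriv i 1 = 0 := by
  simpa using Δ.deriv_mul i 1 1

lemma deriv_algebraMap (i : ι) (c : k) : Δ.deriv i (algebraMap k A c) = 0 := by
  rw [Algebra.algebraMap_eq_smul_one, map_smul, deriv_one, smul_zero]

lemma deriv_twist_symm (i : ι) (a : A) :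
    Δ.deriv i ((Δ.twist i).symm a) = -(Δ.twist i).symm (Δ.deriv i a) := by
  apply (Δ.twist i).injective
  rw [← neg_eq_iff_eq_neg.2 (Δ.deriv_twist i _)]
  simp

/-- The commutation data of the opposite algebra, read off from `a G = G s⁻¹(a) - D(s⁻¹ a)`. -/
def opposite : NilSkewSystem k ι Aᵐᵒᵖ where
  twist i := AlgEquiv.op (Δ.twist i).symm
  deriv i := -((opLinearEquiv k).toLinearMap ∘ₗ Δ.deriv i ∘ₗ
    (Δ.twist i).symm.toLinearMap ∘ₗ (opLinearEquiv k).symm.toLinearMap)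
  deriv_mul i a b := by
    apply unop_injective
    simp [Δ.deriv_mul]
  deriv_deriv i a := by simp [deriv_twist_symm, Δ.deriv_deriv]
  deriv_twist i a := by simp [deriv_twist_symm]

lemma twist_opposite (i : ι) (a : A) :
    Δ.opposite.twist i (op a) = op ((Δ.twist i).symm a) := rfl

lemma deriv_opposite (i : ι) (a : A) :
    Δ.opposite.deriv i (op a) = -op (Δ.deriv i ((Δ.twist i).symm a)) := rfl

/-- Elements `gen i` of an algebra `B` over `A` satisfying the relations `Gᵢ² = 0` and
`Gᵢ a = Dᵢ a + sᵢ(a) Gᵢ`. -/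
structure Realization (B : Type*) [Ring B] [Algebra k B] where
  coeff : A →ₐ[k] B
  gen : ι → B
  gen_mul_gen : ∀ i, gen i * gen i = 0
  gen_mul_coeff : ∀ i a, gen i * coeff a = coeff (Δ.deriv i a) + coeff (Δ.twist i a) * gen i

/-- A realization need only satisfy the commutation relation on algebra generators of `A`. -/
def Realization.ofAdjoin {Δ : NilSkewSystem k ι A} {B : Type*} [Ring B] [Algebra k B]
    (coeff : A →ₐ[k] B) (gen : ι → B) (gen_mul_gen : ∀ i, gen i * gen i = 0) {t : Set A}
    (ht : Algebra.adjoin k t = ⊤)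
    (gen_mul_coeff : ∀ i, ∀ a ∈ t,
      gen i * coeff a = coeff (Δ.deriv i a) + coeff (Δ.twist i a) * gen i) :
    Δ.Realization B where
  coeff := coeff
  gen := gen
  gen_mul_gen := gen_mul_gen
  gen_mul_coeff i a := by
    have ha : a ∈ Algebra.adjoin k t := ht ▸ Algebra.mem_top
    induction ha using Algebra.adjoin_induction with
    | mem a ha => exact gen_mul_coeff i a ha
    | algebraMap c =>
      simp only [deriv_algebraMap, AlgEquiv.commutes, AlgHom.commutes, map_zero, zero_add,
        Algebra.commutes]
    | add a b _ _ ha hb =>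
      simp only [map_add, mul_add, add_mul, ha, hb]
      abel
    | mul a b _ _ ha hb =>
      rw [map_mul, ← mul_assoc, ha, add_mul, mul_assoc (coeff _) (gen i), hb, Δ.deriv_mul]
      simp only [map_add, map_mul, mul_add, mul_assoc, add_assoc]

/-- The operator `a e_w ↦ Dᵢ(a) e_w + sᵢ(a) e_{iw}` by which `Gᵢ` acts on the model module. -/
def genEnd (i : ι) : Module.End k (ReducedWord ι →₀ A) :=
  Finsupp.lsum k fun w => Finsupp.lsingle w ∘ₗ Δ.deriv i +
    (LinearMap.toSpanSingleton A _ (ReducedWord.consVec A i w)).restrictScalars k ∘ₗ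
      (Δ.twist i).toLinearMap

lemma genEnd_single (i : ι) (w : ReducedWord ι) (a : A) :
    Δ.genEnd i (Finsupp.single w a) =
      Finsupp.single w (Δ.deriv i a) + Δ.twist i a • ReducedWord.consVec A i w := by
  simp [genEnd]

lemma genEnd_smul (i : ι) (a : A) (m : ReducedWord ι →₀ A) :
    Δ.genEnd i (a • m) = Δ.deriv i a • m + Δ.twist i a • Δ.genEnd i m := by
  induction m using Finsupp.induction_linear with
  | zero => simp
  | add x y hx hy =>
    simp only [smul_add, map_add, hx, hy]
    abel
  | single w b =>
    simp only [Finsupp.smul_single, smul_eq_mul, genEnd_single, Δ.deriv_mul, map_mul,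
      Finsupp.single_add, smul_add, mul_smul, add_assoc]

lemma genEnd_consVec (i : ι) (w : ReducedWord ι) : Δ.genEnd i (ReducedWord.consVec A i w) = 0 := by
  by_cases h : (i :: w.1).IsChain (· ≠ ·)
  · have not_reduced : ¬ (i :: i :: w.1).IsChain (· ≠ ·) := fun h' =>
      (List.isChain_cons_cons.1 h').1 rfl
    rw [ReducedWord.consVec_of_isChain h, genEnd_single, deriv_one,
      ReducedWord.consVec_of_not_isChain (w := ⟨i :: w.1, h⟩) not_reduced]
    simp
  · rw [ReducedWord.consVec_of_not_isChain h, map_zero]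

lemma genEnd_genEnd (i : ι) (m : ReducedWord ι →₀ A) : Δ.genEnd i (Δ.genEnd i m) = 0 := by
  induction m using Finsupp.induction_linear with
  | zero => simp
  | add x y hx hy => rw [map_add, map_add, hx, hy, add_zero]
  | single w a =>
    rw [genEnd_single, map_add, genEnd_single, genEnd_smul, genEnd_consVec, Δ.deriv_deriv,
      Δ.deriv_twist]
    simp

/-- The model of the defining relations by operators on the free left `A`-module on the reduced
words. -/
def model : Δ.Realization (Module.End k (ReducedWord ι →₀ A)) where
  coeff := Algebra.lsmul k k _
  gen := Δ.genEnd
  gen_mul_gen i := LinearMap.ext (Δ.genEnd_genEnd i)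
  gen_mul_coeff i a := LinearMap.ext (Δ.genEnd_smul i a)

end Basic

namespace Realization

section LeftCombination

variable {k ι A B : Type*} [CommRing k] [Ring A] [Algebra k A] [Ring B] [Algebra k B]
  {Δ : NilSkewSystem k ι A} (R : Δ.Realization B)

/-- The left `A`-linear map `∑ a_w e_w ↦ ∑ a_w G_w`. -/
def leftCombination : (ReducedWord ι →₀ A) →ₗ[k] B :=
  Finsupp.lsum k fun w => LinearMap.mulRight k (w.1.map R.gen).prod ∘ₗ R.coeff.toLinearMap

lemma leftCombination_apply (c : ReducedWord ι →₀ A) :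
    R.leftCombination c = c.sum fun w a => R.coeff a * (w.1.map R.gen).prod := rfl

lemma leftCombination_single (w : ReducedWord ι) (a : A) :
    R.leftCombination (Finsupp.single w a) = R.coeff a * (w.1.map R.gen).prod := by
  simp [leftCombination]

lemma leftCombination_smul (a : A) (c : ReducedWord ι →₀ A) :
    R.leftCombination (a • c) = R.coeff a * R.leftCombination c := by
  induction c using Finsupp.induction_linear with
  | zero => simp
  | add x y hx hy => rw [smul_add, map_add, hx, hy, map_add, mul_add]
  | single w b =>
    rw [Finsupp.smul_single, leftCombination_single, leftCombination_single, smul_eq_mul,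
      map_mul, mul_assoc]

lemma leftCombination_consVec (i : ι) (w : ReducedWord ι) :
    R.leftCombination (ReducedWord.consVec A i w) = R.gen i * (w.1.map R.gen).prod := by
  by_cases h : (i :: w.1).IsChain (· ≠ ·)
  · rw [ReducedWord.consVec_of_isChain h, leftCombination_single]
    simp
  · obtain ⟨v, hv⟩ := ReducedWord.exists_eq_cons_of_not_isChain_cons h
    rw [ReducedWord.consVec_of_not_isChain h, map_zero, hv, List.map_cons, List.prod_cons,
      ← mul_assoc, R.gen_mul_gen, zero_mul]

lemma leftCombination_genEnd (i : ι) (c : ReducedWord ι →₀ A) :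
    R.leftCombination (Δ.genEnd i c) = R.gen i * R.leftCombination c := by
  induction c using Finsupp.induction_linear with
  | zero => simp
  | add x y hx hy => simp only [map_add, mul_add, hx, hy]
  | single w a =>
    rw [genEnd_single, map_add, leftCombination_smul, leftCombination_consVec,
      leftCombination_single, leftCombination_single, ← mul_assoc, ← mul_assoc, R.gen_mul_coeff,
      add_mul]

section ActionOnModel

variable {f : B →ₐ[k] Module.End k (ReducedWord ι →₀ A)}

lemma map_gen_word (hgen : ∀ i, f (R.gen i) = Δ.genEnd i) (w : ReducedWord ι) :
    f (w.1.map R.gen).prod (Finsupp.single .nil 1) = Finsupp.single w 1 := by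
  obtain ⟨w, hw⟩ := w
  induction w with
  | nil => simp [ReducedWord.nil]
  | cons i w ih =>
    rw [List.map_cons, List.prod_cons, map_mul, Module.End.mul_apply, ih hw.tail, hgen,
      genEnd_single, deriv_one, ReducedWord.consVec_of_isChain (w := ⟨w, hw.tail⟩) hw]
    simp

lemma map_leftCombination (hcoeff : ∀ a c, f (R.coeff a) c = a • c)
    (hgen : ∀ i, f (R.gen i) = Δ.genEnd i) (c : ReducedWord ι →₀ A) :
    f (R.leftCombination c) (Finsupp.single .nil 1) = c := by
  induction c using Finsupp.induction_linear with
  | zero => simp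
  | add x y hx hy => rw [map_add, map_add, LinearMap.add_apply, hx, hy]
  | single w a =>
    rw [leftCombination_single, map_mul, Module.End.mul_apply, R.map_gen_word hgen, hcoeff,
      Finsupp.smul_single_one]

lemma leftCombination_map_apply (hcoeff : ∀ a c, f (R.coeff a) c = a • c)
    (hgen : ∀ i, f (R.gen i) = Δ.genEnd i) {x : B}
    (hx : x ∈ Algebra.adjoin k (Set.range R.coeff ∪ Set.range R.gen)) (c : ReducedWord ι →₀ A) :
    R.leftCombination (f x c) = x * R.leftCombination c := by
  induction hx using Algebra.adjoin_induction generalizing c with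
  | mem x hx =>
    rcases hx with ⟨a, rfl⟩ | ⟨i, rfl⟩
    · rw [hcoeff, leftCombination_smul]
    · rw [hgen, leftCombination_genEnd]
  | algebraMap r => simp [Algebra.smul_def]
  | add x y _ _ hx hy => rw [map_add, LinearMap.add_apply, map_add, hx, hy, add_mul]
  | mul x y _ _ hx hy => rw [map_mul, Module.End.mul_apply, hx, hy, mul_assoc]

end ActionOnModel

end LeftCombination

section Opposite

variable {k ι A B C : Type*} [CommRing k] [Ring A] [Algebra k A] [Ring B] [Algebra k B]
  [Ring C] [Algebra k C] {Δ : NilSkewSystem k ι A}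

lemma coeff_mul_gen (R : Δ.Realization B) (i : ι) (a : A) :
    R.coeff a * R.gen i =
      -R.coeff (Δ.deriv i ((Δ.twist i).symm a)) + R.gen i * R.coeff ((Δ.twist i).symm a) := by
  rw [R.gen_mul_coeff, AlgEquiv.apply_symm_apply, neg_add_cancel_left]

/-- The realization of the opposite data in `Bᵐᵒᵖ`. -/
def opposite (R : Δ.Realization B) : Δ.opposite.Realization Bᵐᵒᵖ where
  coeff := AlgHom.op R.coeff
  gen i := op (R.gen i)
  gen_mul_gen i := by rw [← op_mul, R.gen_mul_gen, op_zero]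
  gen_mul_coeff i a := by
    induction a using MulOpposite.rec' with | _ a
    rw [deriv_opposite, twist_opposite, map_neg]
    exact congrArg op (R.coeff_mul_gen i a)

lemma opposite_coeff (R : Δ.Realization B) (a : A) : R.opposite.coeff (op a) = op (R.coeff a) := rfl

lemma opposite_gen (R : Δ.Realization B) (i : ι) : R.opposite.gen i = op (R.gen i) := rfl

/-- The converse of `opposite`. -/
def ofOpposite (T : Δ.opposite.Realization C) : Δ.Realization Cᵐᵒᵖ where
  coeff := AlgHom.opComm.symm T.coeff
  gen i := op (T.gen i)
  gen_mul_gen i := by rw [← op_mul, T.gen_mul_gen, op_zero]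
  gen_mul_coeff i a := by
    have h := T.gen_mul_coeff i (op (Δ.twist i a))
    rw [twist_opposite, deriv_opposite, AlgEquiv.symm_apply_apply, map_neg,
      ← sub_eq_neg_add, eq_sub_iff_add_eq'] at h
    exact congrArg op h.symm

lemma prod_map_opposite_gen (R : Δ.Realization B) (w : List ι) :
    (w.reverse.map R.opposite.gen).prod = op (w.map R.gen).prod := by
  rw [op_list_prod, List.map_map, List.map_reverse]
  rfl

/-- Relabelling a family of coefficients of right combinations as coefficients of left combinations
in the opposite algebra. -/
def oppositeCoeffs : (ReducedWord ι →₀ A) ≃ (ReducedWord ι →₀ Aᵐᵒᵖ) :=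
  (Finsupp.domCongr ReducedWord.reverse).toEquiv.trans
    (Finsupp.mapRange.addEquiv opAddEquiv).toEquiv

lemma leftCombination_opposite (R : Δ.Realization B) (c : ReducedWord ι →₀ A) :
    R.opposite.leftCombination (oppositeCoeffs c) =
      op (c.sum fun w a => (w.1.map R.gen).prod * R.coeff a) := by
  have hsum : R.opposite.leftCombination (oppositeCoeffs c) = c.sum fun w a =>
      R.opposite.coeff (op a) * (w.1.reverse.map R.opposite.gen).prod := by
    simp [leftCombination_apply, oppositeCoeffs, Finsupp.sum_mapRange_index,
      Finsupp.equivMapDomain_eq_mapDomain,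
      Finsupp.sum_mapDomain_index_inj ReducedWord.reverse.injective, ReducedWord.coe_reverse]
  simp_rw [hsum, prod_map_opposite_gen, opposite_coeff, ← op_mul, op_finsuppSum]

end Opposite

section Presentation

variable {k B : Type*} {ι A : Type u} [CommRing k] [Ring A] [Algebra k A] [Ring B] [Algebra k B]
  {Δ : NilSkewSystem k ι A}

/-- `B` is the algebra presented by `A`, the generators `Gᵢ` and the relations of a realization;
the mapping property is only required for targets in the universe of the model module. -/
structure IsPresentation (R : Δ.Realization B) : Prop where
  adjoin_eq_top : Algebra.adjoin k (Set.range R.coeff ∪ Set.range R.gen) = ⊤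
  exists_lift : ∀ {C : Type u} [Ring C] [Algebra k C] (T : Δ.Realization C),
    ∃ f : B →ₐ[k] C, (∀ a, f (R.coeff a) = T.coeff a) ∧ ∀ i, f (R.gen i) = T.gen i

namespace IsPresentation

variable {R : Δ.Realization B}

lemma opposite (hR : R.IsPresentation) : R.opposite.IsPresentation where
  adjoin_eq_top := by
    rw [← Subalgebra.op_top, ← hR.adjoin_eq_top, Subalgebra.op_adjoin]
    congr 1
    ext x
    obtain ⟨x, rfl⟩ := op_surjective x
    simp [opposite_gen, opposite_coeff]
  exists_lift T := by
    obtain ⟨f, hcoeff, hgen⟩ := hR.exists_lift T.ofOpposite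
    exact ⟨AlgHom.opComm f, fun a => congrArg unop (hcoeff a.unop), fun i => congrArg unop (hgen i)⟩

lemma leftCombination_bijective (hR : R.IsPresentation) :
    Function.Bijective R.leftCombination := by
  obtain ⟨f, hcoeff, hgen⟩ := hR.exists_lift Δ.model
  replace hcoeff (a : A) (c : ReducedWord ι →₀ A) : f (R.coeff a) c = a • c :=
    LinearMap.congr_fun (hcoeff a) c
  refine Function.bijective_iff_has_inverse.2
    ⟨fun x => f x (Finsupp.single .nil 1), R.map_leftCombination hcoeff hgen, fun x => ?_⟩
  have hx : x ∈ Algebra.adjoin k (Set.range R.coeff ∪ Set.range R.gen) :=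
    hR.adjoin_eq_top ▸ Algebra.mem_top
  rw [R.leftCombination_map_apply hcoeff hgen hx, leftCombination_single]
  simp [ReducedWord.nil]

end IsPresentation

end Presentation

end Realization

end NilSkewSystem

/-- The reflection property underlying divided differences: an involution `s` negating the
non-zero-divisor `r` and congruent to the identity modulo `r`. -/
structure IsReflectionAlong {k A : Type*} [CommRing k] [CommRing A] [Algebra k A]
    (s : A ≃ₐ[k] A) (r : A) : Prop where
  apply_apply : ∀ a, s (s a) = a
  apply_root : s r = -r
  root_dvd_sub : ∀ a, r ∣ a - s a
  isLeftRegular : IsLeftRegular r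

namespace IsReflectionAlong

variable {k A : Type*} [CommRing k] [CommRing A] [Algebra k A] {s : A ≃ₐ[k] A} {r : A}

lemma exists_root_mul_eq (h : IsReflectionAlong s r) :
    ∃ D : A →ₗ[k] A, ∀ a, r * D a = a - s a := by
  choose D hD using h.root_dvd_sub
  refine ⟨{ toFun := D, map_add' := fun a b => ?_, map_smul' := fun c a => ?_ },
    fun a => (hD a).symm⟩
  · apply h.isLeftRegular
    simp only [mul_add, ← hD, map_add]
    ring
  · apply h.isLeftRegular
    simp only [RingHom.id_apply, mul_smul_comm, ← hD, map_smul, smul_sub]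

/-- The divided difference (Demazure operator) `a ↦ (a - s a) / r`. -/
def dividedDifference (h : IsReflectionAlong s r) : A →ₗ[k] A :=
  h.exists_root_mul_eq.choose

lemma root_mul_dividedDifference (h : IsReflectionAlong s r) (a : A) :
    r * h.dividedDifference a = a - s a :=
  h.exists_root_mul_eq.choose_spec a

lemma dividedDifference_mul (h : IsReflectionAlong s r) (a b : A) :
    h.dividedDifference (a * b) = h.dividedDifference a * b + s a * h.dividedDifference b := by
  apply h.isLeftRegular
  have ha := h.root_mul_dividedDifference a
  have hb := h.root_mul_dividedDifference b
  have hab := h.root_mul_dividedDifference (a * b)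
  rw [map_mul s] at hab
  linear_combination hab - b * ha - s a * hb

lemma apply_dividedDifference (h : IsReflectionAlong s r) (a : A) :
    s (h.dividedDifference a) = h.dividedDifference a := by
  apply h.isLeftRegular
  have ha := h.root_mul_dividedDifference a
  have hsa := congrArg s ha
  rw [map_mul s, h.apply_root, map_sub, h.apply_apply] at hsa
  linear_combination -hsa - ha

lemma dividedDifference_apply (h : IsReflectionAlong s r) (a : A) :
    h.dividedDifference (s a) = -h.dividedDifference a := by
  apply h.isLeftRegular
  have ha := h.root_mul_dividedDifference a
  have hsa := h.root_mul_dividedDifference (s a)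
  rw [h.apply_apply] at hsa
  linear_combination ha + hsa

lemma dividedDifference_dividedDifference (h : IsReflectionAlong s r) (a : A) :
    h.dividedDifference (h.dividedDifference a) = 0 := by
  apply h.isLeftRegular
  simp [h.root_mul_dividedDifference, h.apply_dividedDifference]

/-- The commutation data given by reflections and their divided differences. -/
def nilSkewSystem {ι : Type*} {s : ι → A ≃ₐ[k] A} {r : ι → A}
    (h : ∀ i, IsReflectionAlong (s i) (r i)) : NilSkewSystem k ι A where
  twist := s
  deriv i := (h i).dividedDifference
  deriv_mul i := (h i).dividedDifference_mul
  deriv_deriv i := (h i).dividedDifference_dividedDifference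
  deriv_twist i a := by rw [(h i).dividedDifference_apply, (h i).apply_dividedDifference]

end IsReflectionAlong

lemma dvd_sub_algHom_of_dvd_X_sub {σ R : Type*} [CommRing R] {r : MvPolynomial σ R}
    {s : MvPolynomial σ R →ₐ[R] MvPolynomial σ R}
    (h : ∀ j, r ∣ MvPolynomial.X j - s (MvPolynomial.X j)) (f : MvPolynomial σ R) :
    r ∣ f - s f := by
  have mk_comp : (Ideal.Quotient.mkₐ R (Ideal.span {r})).comp s =
      Ideal.Quotient.mkₐ R (Ideal.span {r}) :=
    MvPolynomial.algHom_ext fun j =>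
      (Ideal.Quotient.eq.2 (Ideal.mem_span_singleton.2 (h j))).symm
  exact Ideal.mem_span_singleton.1 (Ideal.Quotient.eq.1 (DFunLike.congr_fun mk_comp f).symm)

section LinearForms

variable {d : ℕ}

lemma eval_lin (θ : Vd d →ₗ[ℂ] ℂ) (v : Vd d) : MvPolynomial.eval v (lin θ) = θ v := by
  conv_rhs => rw [← (Pi.basisFun ℂ (Fin d)).sum_repr v]
  simp [lin, MvPolynomial.smul_eval, mul_comm]

lemma eval_glAct (g : GL (Fin d) ℂ) (v : Vd d) (f : Ad d) :
    MvPolynomial.eval v (glAct g f) =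
      MvPolynomial.eval ((g⁻¹ : GL (Fin d) ℂ).1.mulVec v) f := by
  have h : (MvPolynomial.aeval v).comp (glAct g) =
      (MvPolynomial.aeval ((g⁻¹ : GL (Fin d) ℂ).1.mulVec v) : Ad d →ₐ[ℂ] ℂ) := by
    refine MvPolynomial.algHom_ext fun j => ?_
    simp [glAct, Matrix.mulVec, dotProduct]
  simpa [MvPolynomial.coe_aeval_eq_eval] using DFunLike.congr_fun h f

lemma lin_proj (j : Fin d) : lin (LinearMap.proj j : Vd d →ₗ[ℂ] ℂ) = MvPolynomial.X j :=
  MvPolynomial.funext fun v => by rw [eval_lin, LinearMap.proj_apply, MvPolynomial.eval_X]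

end LinearForms

namespace CoxeterSetup

variable {d n : ℕ} (S : CoxeterSetup d n) (i : Fin n)

lemma s_mul_s : (S.s i : GL (Fin d) ℂ) * S.s i = 1 := by
  refine Units.ext (Matrix.toLin'.injective (LinearMap.ext fun v => ?_))
  simp only [Units.val_mul, Matrix.toLin'_mul, LinearMap.comp_apply, Matrix.toLin'_apply, S.refl,
    map_sub, map_smul, S.pairing, Units.val_one, Matrix.one_mulVec]
  module

lemma eval_glAct_s (v : Vd d) (f : Ad d) :
    MvPolynomial.eval v (glAct (S.s i) f) = MvPolynomial.eval (v - S.α i v • S.coroot i) f := by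
  rw [eval_glAct, inv_eq_of_mul_eq_one_left (S.s_mul_s i), S.refl]

lemma glAct_s_glAct_s (f : Ad d) : glAct (S.s i) (glAct (S.s i) f) = f := by
  refine MvPolynomial.funext fun v => ?_
  rw [eval_glAct_s, eval_glAct_s]
  congr 2
  simp only [map_sub, map_smul, S.pairing]
  module

/-- The action of the simple reflection `sᵢ` on polynomials. -/
def reflection : Ad d ≃ₐ[ℂ] Ad d :=
  AlgEquiv.ofAlgHom (glAct (S.s i)) (glAct (S.s i)) (AlgHom.ext (S.glAct_s_glAct_s i))
    (AlgHom.ext (S.glAct_s_glAct_s i))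

lemma reflection_apply (f : Ad d) : S.reflection i f = glAct (S.s i) f := rfl

lemma lin_sub_reflection_lin (θ : Vd d →ₗ[ℂ] ℂ) :
    lin θ - S.reflection i (lin θ) = lin (S.α i) * MvPolynomial.C (θ (S.coroot i)) := by
  refine MvPolynomial.funext fun v => ?_
  simp [reflection_apply, eval_glAct_s, eval_lin]

lemma lin_root_ne_zero : lin (S.α i) ≠ 0 := by
  intro h
  have eval_coroot := eval_lin (S.α i) (S.coroot i)
  simp [h, S.pairing] at eval_coroot

lemma isReflectionAlong_reflection : IsReflectionAlong (S.reflection i) (lin (S.α i)) where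
  apply_apply := S.glAct_s_glAct_s i
  apply_root := by
    have h := S.lin_sub_reflection_lin i (S.α i)
    rw [S.pairing, map_ofNat] at h
    linear_combination -h
  root_dvd_sub := dvd_sub_algHom_of_dvd_X_sub (s := (S.reflection i).toAlgHom) fun j => by
    rw [← lin_proj]
    exact ⟨_, S.lin_sub_reflection_lin i _⟩
  isLeftRegular := IsLeftCancelMulZero.mul_left_cancel_of_ne_zero (S.lin_root_ne_zero i)

/-- The simple reflections of a Coxeter group and their Demazure operators. -/
def demazureSystem : NilSkewSystem ℂ (Fin n) (Ad d) :=
  IsReflectionAlong.nilSkewSystem S.isReflectionAlong_reflection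

lemma demazureSystem_twist (f : Ad d) : S.demazureSystem.twist i f = glAct (S.s i) f := rfl

lemma demazureSystem_deriv_lin (θ : Vd d →ₗ[ℂ] ℂ) :
    S.demazureSystem.deriv i (lin θ) = algebraMap ℂ (Ad d) (θ (S.coroot i)) := by
  apply (S.isReflectionAlong_reflection i).isLeftRegular
  exact ((S.isReflectionAlong_reflection i).root_mul_dividedDifference _).trans
    (S.lin_sub_reflection_lin i θ)

lemma ofA_eq_mkAlgHom (a : Ad d) :
    ofA S a = RingQuot.mkAlgHom ℂ (DRel S) (FreeAlgebra.ι ℂ (Sum.inl a)) := by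
  rw [← AlgHom.coe_toRingHom, RingQuot.mkAlgHom_coe]
  rfl

lemma GG_eq_mkAlgHom :
    GG S i = RingQuot.mkAlgHom ℂ (DRel S) (FreeAlgebra.ι ℂ (Sum.inr i)) := by
  rw [← AlgHom.coe_toRingHom, RingQuot.mkAlgHom_coe]
  rfl

/-- The canonical map `ofA` as a homomorphism of `ℂ`-algebras. -/
def ofAₐ : Ad d →ₐ[ℂ] DD S :=
  { ofA S with
    commutes' := fun c => by
      have h := RingQuot.mkAlgHom_rel ℂ (DRel.scalar (S := S) c)
      rw [AlgHom.commutes, ← ofA_eq_mkAlgHom] at h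
      exact h.symm }

lemma GG_mul_GG : GG S i * GG S i = 0 := by
  simpa [GG_eq_mkAlgHom] using RingQuot.mkAlgHom_rel ℂ (DRel.sq (S := S) i)

lemma GG_mul_ofA_lin (θ : Vd d →ₗ[ℂ] ℂ) :
    GG S i * ofA S (lin θ) =
      ofA S (S.demazureSystem.deriv i (lin θ)) + ofA S (glAct (S.s i) (lin θ)) * GG S i := by
  have h := RingQuot.mkAlgHom_rel ℂ (DRel.straighten (S := S) i θ)
  simp only [map_add, map_mul, ← ofA_eq_mkAlgHom, ← GG_eq_mkAlgHom, AlgHom.commutes] at h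
  rw [h, demazureSystem_deriv_lin]
  exact congrArg (· + _) (S.ofAₐ.commutes _).symm

/-- The defining realization of the Demazure descent algebra. -/
def realization : S.demazureSystem.Realization (DD S) :=
  .ofAdjoin S.ofAₐ (GG S) S.GG_mul_GG MvPolynomial.adjoin_range_X <| by
    rintro i _ ⟨j, rfl⟩
    rw [← lin_proj]
    exact S.GG_mul_ofA_lin i _

lemma lift_eq_of_DRel {C : Type*} [Ring C] [Algebra ℂ C] (T : S.demazureSystem.Realization C)
    ⦃x y : FreeAlgebra ℂ (Ad d ⊕ Fin n)⦄ (h : DRel S x y) :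
    FreeAlgebra.lift ℂ (Sum.elim T.coeff T.gen) x =
      FreeAlgebra.lift ℂ (Sum.elim T.coeff T.gen) y := by
  cases h with
  | add a b => simp
  | mul a b => simp
  | scalar c => simp only [AlgHom.commutes, FreeAlgebra.lift_ι_apply, Sum.elim_inl]
  | sq i => simp [T.gen_mul_gen]
  | straighten i θ =>
    simp only [map_add, map_mul, AlgHom.commutes, FreeAlgebra.lift_ι_apply, Sum.elim_inl,
      Sum.elim_inr]
    rw [T.gen_mul_coeff, demazureSystem_deriv_lin, AlgHom.commutes, demazureSystem_twist]

lemma adjoin_ofA_GG :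
    Algebra.adjoin ℂ (Set.range (ofA S) ∪ Set.range (GG S)) = ⊤ := by
  have range_generators : Set.range (ofA S) ∪ Set.range (GG S) =
      RingQuot.mkAlgHom ℂ (DRel S) '' Set.range (FreeAlgebra.ι ℂ) := by
    rw [← Set.Sum.elim_range, ← Set.range_comp]
    congr 1
    ext (a | i)
    · exact S.ofA_eq_mkAlgHom a
    · exact S.GG_eq_mkAlgHom i
  rw [range_generators, ← AlgHom.map_adjoin, FreeAlgebra.adjoin_range_ι, Algebra.map_top,
    AlgHom.range_eq_top]
  exact RingQuot.mkAlgHom_surjective ℂ (DRel S)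

lemma isPresentation_realization : S.realization.IsPresentation where
  adjoin_eq_top := S.adjoin_ofA_GG
  exists_lift T := by
    refine ⟨RingQuot.liftAlgHom ℂ ⟨FreeAlgebra.lift ℂ (Sum.elim T.coeff T.gen),
      S.lift_eq_of_DRel T⟩, fun a => ?_, fun i => ?_⟩
    · change RingQuot.liftAlgHom ℂ _ (ofA S a) = _
      rw [ofA_eq_mkAlgHom, RingQuot.liftAlgHom_mkAlgHom_apply, FreeAlgebra.lift_ι_apply,
        Sum.elim_inl]
    · change RingQuot.liftAlgHom ℂ _ (GG S i) = _
      rw [GG_eq_mkAlgHom, RingQuot.liftAlgHom_mkAlgHom_apply, FreeAlgebra.lift_ι_apply,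
        Sum.elim_inr]

end CoxeterSetup

open NilSkewSystem.Realization in
theorem demazureDescentAlgebra_free_over_A_general {k B : Type*} {ι A : Type u} [CommRing k]
    [Ring A] [Algebra k A] [Ring B] [Algebra k B] {Δ : NilSkewSystem k ι A}
    {R : Δ.Realization B} (hR : R.IsPresentation) :
    (∀ x : B, ∃! c : ReducedWord ι →₀ A,
        x = c.sum fun w a => R.coeff a * (w.1.map R.gen).prod) ∧
    (∀ x : B, ∃! c : ReducedWord ι →₀ A,
        x = c.sum fun w a => (w.1.map R.gen).prod * R.coeff a) := by
  constructor
  · intro x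
    simpa only [R.leftCombination_apply, eq_comm] using hR.leftCombination_bijective.existsUnique x
  · intro x
    refine (oppositeCoeffs.existsUnique_congr fun c => ?_).2
      (hR.opposite.leftCombination_bijective.existsUnique (op x))
    rw [leftCombination_opposite, op_inj, eq_comm]

/-- `𝔇` is free as a left `A`-module with basis the words in the `Gᵢ`
with no two consecutive equal letters (every element is uniquely a finite `A`-linear
combination `∑ a_w · G_w`), and the same words form a basis of `𝔇` as a right `A`-module. -/
theorem demazureDescentAlgebra_free_over_A {d n : ℕ} (S : CoxeterSetup d n) :
    (∀ x : DD S, ∃! c : {w : List (Fin n) // w.Chain' (· ≠ ·)} →₀ Ad d,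
        x = c.sum fun w a => ofA S a * wordProd S w.1) ∧
    (∀ x : DD S, ∃! c : {w : List (Fin n) // w.Chain' (· ≠ ·)} →₀ Ad d,
        x = c.sum fun w a => wordProd S w.1 * ofA S a) :=
  demazureDescentAlgebra_free_over_A_general S.isPresentation_realization
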